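/- arXiv:1303.7146 — 3 statements merged into one kernel-verified Lean document; each statement's English description precedes it below -/
import Mathlib

section
/- Let (X, δ) be a bounded hyperconvex diversity and let (H_i)_{i∈I} be a family of subsets of X directed by reverse inclusion (i.e., H_i ⊆ H_j whenever j ≤ i) such that for each i ∈ I the restriction (H_i, δ) is a hyperconvex diversity. Then the intersection ⋂_{i∈I} H_i is nonempty. -/
/-- A diversity on `X`. -/
structure Diversity (X : Type*) [DecidableEq X] where
  delta : Finset X → ℝ
  nonneg : ∀ A, 0 ≤ delta A
  eq_zero_iff : ∀ A, delta A = 0 ↔ A.card ≤ 1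
  triangle : ∀ A B C : Finset X, B.Nonempty →
    delta (A ∪ C) ≤ delta (A ∪ B) + delta (B ∪ C)

namespace Diversity

variable {X : Type*} [DecidableEq X]

/-- Hyperconvexity of a diversity. -/
def Hyperconvex (D : Diversity X) : Prop :=
  ∀ r : Finset X → ℝ, r ∅ = 0 →
    (∀ 𝒜 : Finset (Finset X), D.delta (𝒜.sup id) ≤ ∑ A ∈ 𝒜, r A) →
    ∃ z : X, ∀ Y : Finset X, D.delta (insert z Y) ≤ r Y

/-- A diversity is bounded if its values are uniformly bounded above. -/
def Bounded (D : Diversity X) : Prop :=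
  ∃ M : ℝ, 0 ≤ M ∧ ∀ A : Finset X, D.delta A ≤ M

/-- The restriction of a diversity to a subset `H ⊆ X`. -/
def restrict (D : Diversity X) (H : Set X) : Diversity H where
  delta A := D.delta (A.image Subtype.val)
  nonneg A := D.nonneg _
  eq_zero_iff A := by
    rw [D.eq_zero_iff, Finset.card_image_of_injective A Subtype.val_injective]
  triangle A B C hB := by
    have h := D.triangle (A.image Subtype.val) (B.image Subtype.val) (C.image Subtype.val)
      (hB.image _)
    simpa [Finset.image_union] using h

end Diversity


theorem exists_mono_ub {D : Type*} [Nonempty D] (r : D → D → Prop) [IsTrans D r] [Std.Refl r]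
    (hd : ∀ a b : D, ∃ c, r a c ∧ r b c) :
    ∃ g : Finset D → D, (∀ F, ∀ a ∈ F, r a (g F)) ∧ ∀ F G, F ⊆ G → r (g F) (g G) := by
  classical
  have hfin : ∀ F : Finset D, ∃ u, ∀ a ∈ F, r a u := by
    intro F
    induction F using Finset.induction_on with
    | empty => exact ⟨Classical.arbitrary D, by simp⟩
    | insert a s ha ih =>
      obtain ⟨u, hu⟩ := ih
      obtain ⟨c, hac, huc⟩ := hd a u
      refine ⟨c, fun b hb => ?_⟩
      rcases Finset.mem_insert.1 hb with rfl | hb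
      · exact hac
      · exact _root_.trans (hu b hb) huc
  choose u hu using hfin
  let step : ∀ F : Finset D, (∀ t, t ⊂ F → D) → D := fun F ih =>
    u (F ∪ F.ssubsets.attach.image (fun t => ih t.1 (Finset.mem_ssubsets.1 t.2)))
  let g : Finset D → D := fun F => Finset.strongInduction (p := fun _ => D) step F
  have hg : ∀ F, g F = u (F ∪ F.ssubsets.attach.image (fun t => g t.1)) := by
    intro F
    exact Finset.strongInduction_eq (p := fun _ => D) step F
  refine ⟨g, fun F a ha => ?_, fun F G hFG => ?_⟩
  · rw [hg]
    exact hu _ _ (Finset.mem_union_left _ ha)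
  · rcases hFG.eq_or_ssubset with rfl | h
    · exact _root_.refl _
    · rw [hg G]
      refine hu _ _ (Finset.mem_union_right _ ?_)
      exact Finset.mem_image.2 ⟨⟨F, Finset.mem_ssubsets.2 h⟩, Finset.mem_attach _ _, rfl⟩

open Cardinal in
theorem directed_of_chain {X : Type*} (P : Set X → Prop)
    (hP : ∀ 𝒞 : Set (Set X), 𝒞.Nonempty → (∀ s ∈ 𝒞, ∀ t ∈ 𝒞, s ⊆ t ∨ t ⊆ s) →
      (∀ s ∈ 𝒞, P s) → P (⋂₀ 𝒞)) :
    ∀ (κ : Cardinal) (𝒟 : Set (Set X)), #𝒟 = κ → 𝒟.Nonempty →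
      (∀ s ∈ 𝒟, ∀ t ∈ 𝒟, ∃ w ∈ 𝒟, w ⊆ s ∧ w ⊆ t) → (∀ s ∈ 𝒟, P s) → P (⋂₀ 𝒟) := by
  classical
  intro κ
  induction κ using WellFoundedLT.induction with
  | ind κ ih =>
  intro 𝒟 hκ hne hdir hall
  have : Nonempty 𝒟 := hne.to_subtype
  let r : 𝒟 → 𝒟 → Prop := fun a b => b.1 ⊆ a.1
  have : IsTrans 𝒟 r := ⟨fun a b c h1 h2 => Set.Subset.trans h2 h1⟩
  have : Std.Refl r := ⟨fun a => Set.Subset.refl _⟩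
  obtain ⟨g, hg1, hg2⟩ := exists_mono_ub r (fun a b => by
    obtain ⟨w, hw, h1, h2⟩ := hdir a.1 a.2 b.1 b.2
    exact ⟨⟨w, hw⟩, h1, h2⟩)
  rcases lt_or_ge κ ℵ₀ with hfin | hinf
  · have : Finite 𝒟 := by rw [← hκ] at hfin; exact Cardinal.lt_aleph0_iff_finite.1 hfin
    have := Fintype.ofFinite 𝒟
    have : ⋂₀ 𝒟 = (g Finset.univ).1 := by
      apply Set.Subset.antisymm
      · exact Set.sInter_subset_of_mem (g Finset.univ).2
      · exact Set.subset_sInter fun t ht => hg1 Finset.univ ⟨t, ht⟩ (Finset.mem_univ _)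
    rw [this]
    exact hall _ (g _).2
  · obtain ⟨wr, wo, hord⟩ := Cardinal.exists_ord_eq 𝒟
    let S : 𝒟 → Set 𝒟 := fun a => insert a {b | wr b a}
    have hS : ∀ a b, wr a b → S a ⊆ S b := by
      intro a b hab x hx
      rcases hx with rfl | hx
      · exact Or.inr hab
      · exact Or.inr (_root_.trans (r := wr) hx hab)
    let E : 𝒟 → Set (Set X) := fun a => {s | ∃ F : Finset 𝒟, ↑F ⊆ S a ∧ s = (g F).1}
    have hEsub : ∀ a, E a ⊆ 𝒟 := by
      rintro a s ⟨F, -, rfl⟩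
      exact (g _).2
    have hcard : ∀ a, #(E a) < κ := by
      intro a
      have h1 : #(E a) ≤ #(Finset (S a)) := by
        have : E a ⊆ Set.range (fun F : Finset (S a) => (g (F.image Subtype.val)).1) := by
          rintro s ⟨F, hF, rfl⟩
          refine ⟨F.subtype (· ∈ S a), ?_⟩
          have : (F.subtype (· ∈ S a)).image Subtype.val = F := by
            ext x
            simp only [Finset.mem_image, Finset.mem_subtype]
            exact ⟨fun ⟨y, hy, h⟩ => h ▸ hy, fun hx => ⟨⟨x, hF hx⟩, hx, rfl⟩⟩
          simp only [this]
        exact (Cardinal.mk_le_mk_of_subset this).trans Cardinal.mk_range_le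
      have h2 : #(S a) < κ := by
        refine lt_of_le_of_lt (Cardinal.mk_insert_le) ?_
        have := Cardinal.card_typein_lt a hord
        rw [Ordinal.card_typein, hκ] at this
        exact Cardinal.add_lt_of_lt hinf this (lt_of_lt_of_le Cardinal.one_lt_aleph0 hinf)
      refine lt_of_le_of_lt h1 ?_
      rcases finite_or_infinite (S a) with hf | hf
      · exact lt_of_lt_of_le (Cardinal.lt_aleph0_of_finite _) hinf
      · rw [Cardinal.mk_finset_of_infinite]; exact h2
    have hPE : ∀ a, P (⋂₀ (E a)) := by
      intro a
      refine ih _ (hcard a) (E a) rfl ⟨_, ∅, by simp, rfl⟩ ?_ (fun s hs => hall s (hEsub a hs))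
      rintro s ⟨F, hF, rfl⟩ t ⟨G, hG, rfl⟩
      exact ⟨_, ⟨F ∪ G, by rw [Finset.coe_union]; exact Set.union_subset hF hG, rfl⟩,
        hg2 _ _ Finset.subset_union_left, hg2 _ _ Finset.subset_union_right⟩
    have hmono : ∀ a b, wr a b → E a ⊆ E b := by
      rintro a b hab s ⟨F, hF, rfl⟩
      exact ⟨F, hF.trans (hS a b hab), rfl⟩
    have heq : ⋂₀ 𝒟 = ⋂₀ (Set.range fun a => ⋂₀ (E a)) := by
      apply Set.Subset.antisymm
      · rintro x hx _ ⟨a, rfl⟩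
        exact fun s hs => hx s (hEsub a hs)
      · intro x hx d hd
        have h1 := hx _ ⟨⟨d, hd⟩, rfl⟩ _ ⟨{⟨d, hd⟩}, by simp [S], rfl⟩
        exact hg1 _ ⟨d, hd⟩ (by simp) h1
    rw [heq]
    refine hP _ (Set.range_nonempty _) ?_ (by rintro _ ⟨a, rfl⟩; exact hPE a)
    rintro _ ⟨a, rfl⟩ _ ⟨b, rfl⟩
    rcases trichotomous_of wr a b with h | rfl | h
    · right; exact Set.sInter_subset_sInter (hmono _ _ h)
    · left; exact Set.Subset.refl _
    · left; exact Set.sInter_subset_sInter (hmono _ _ h)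

namespace Diversity

section Aux

variable {X : Type*} [DecidableEq X]

/-- A set of constraints `(Y, c)` (meaning `δ({z} ∪ Y) ≤ c`) is feasible. -/
def Feas (D : Diversity X) (K : Set (Finset X × ℝ)) : Prop :=
  ∀ F : Finset (Finset X × ℝ), ↑F ⊆ K → D.delta (F.biUnion Prod.fst) ≤ ∑ p ∈ F, p.2

/-- Hyperconvexity of a subset, in terms of constraints. -/
def HC (D : Diversity X) (H : Set X) : Prop :=
  ∀ K : Set (Finset X × ℝ), (∀ p ∈ K, (↑p.1 : Set X) ⊆ H) → D.Feas K →
    ∃ z ∈ H, ∀ p ∈ K, D.delta (insert z p.1) ≤ p.2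

variable (D : Diversity X)

theorem delta_empty : D.delta ∅ = 0 := (D.eq_zero_iff _).2 (by simp)

theorem delta_singleton (x : X) : D.delta {x} = 0 := (D.eq_zero_iff _).2 (by simp)

theorem delta_le_insert (z : X) (A : Finset X) : D.delta A ≤ D.delta (insert z A) := by
  have h := D.triangle A {z} ∅ (by simp)
  simp only [Finset.union_empty, delta_singleton, add_zero] at h
  rwa [Finset.union_comm, ← Finset.insert_eq] at h

theorem delta_insert_union (z : X) (A C : Finset X) :
    D.delta (insert z (A ∪ C)) ≤ D.delta (insert z A) + D.delta (insert z C) := by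
  have h := D.triangle (insert z A) {z} C (by simp)
  have e1 : insert z A ∪ {z} = insert z A := by ext; simp
  have e2 : insert z A ∪ C = insert z (A ∪ C) := by ext; simp
  have e3 : {z} ∪ C = insert z C := by ext; simp
  rwa [e1, e2, e3] at h

theorem delta_insert_biUnion {ι : Type*} [DecidableEq ι] (z : X) (F : Finset ι)
    (f : ι → Finset X) :
    D.delta (insert z (F.biUnion f)) ≤ ∑ p ∈ F, D.delta (insert z (f p)) := by
  induction F using Finset.induction_on with
  | empty => simp [delta_singleton]
  | insert a s ha ih =>
    rw [Finset.biUnion_insert, Finset.sum_insert ha]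
    exact (D.delta_insert_union z _ _).trans (by gcongr)

theorem feas_of_sol {K : Set (Finset X × ℝ)}
    (h : ∀ F : Finset (Finset X × ℝ), ↑F ⊆ K → ∃ z, ∀ p ∈ F, D.delta (insert z p.1) ≤ p.2) :
    D.Feas K := by
  intro F hF
  obtain ⟨z, hz⟩ := h F hF
  exact (D.delta_le_insert z _).trans
    ((D.delta_insert_biUnion z F Prod.fst).trans (Finset.sum_le_sum hz))

theorem Feas.nonneg {D : Diversity X} {K : Set (Finset X × ℝ)} (h : D.Feas K)
    {p : Finset X × ℝ} (hp : p ∈ K) : 0 ≤ p.2 := by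
  have := h {p} (by simpa using hp)
  simp only [Finset.sum_singleton] at this
  exact (D.nonneg _).trans this

/-- Constraints based on points solving the first system may be added. -/
theorem Feas.union {D : Diversity X} {K₀ K₁ : Set (Finset X × ℝ)}
    (h₀ : D.Feas K₀) (h₁ : D.Feas K₁)
    (h : ∀ q ∈ K₁, ∀ y ∈ q.1, ∀ p ∈ K₀, D.delta (insert y p.1) ≤ p.2) :
    D.Feas (K₀ ∪ K₁) := by
  classical
  intro F hF
  have hs := Finset.sum_filter_add_sum_filter_not F (· ∈ K₀) (fun p => p.2)
  set F₀ := F.filter (· ∈ K₀) with hF₀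
  set F₁ := F.filter (fun p => ¬ p ∈ K₀) with hF₁
  have hsub₀ : ∀ p ∈ F₀, p ∈ K₀ := fun p hp => (Finset.mem_filter.1 hp).2
  have hsub₁ : ∀ p ∈ F₁, p ∈ K₁ := fun p hp => by
    obtain ⟨h1, h2⟩ := Finset.mem_filter.1 hp
    exact (hF h1).resolve_left h2
  have hU : F.biUnion Prod.fst = F₁.biUnion Prod.fst ∪ F₀.biUnion Prod.fst := by
    rw [← Finset.union_biUnion, Finset.union_comm, hF₀, hF₁, Finset.filter_union_filter_not_eq]
  rw [hU, ← hs]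
  have e₀ := h₀ F₀ (fun p hp => hsub₀ p hp)
  have e₁ := h₁ F₁ (fun p hp => hsub₁ p hp)
  rcases (F₁.biUnion Prod.fst).eq_empty_or_nonempty with he | ⟨y, hy⟩
  · rw [he, Finset.empty_union]
    have : 0 ≤ ∑ p ∈ F₁, p.2 := Finset.sum_nonneg fun p hp => h₁.nonneg (hsub₁ p hp)
    linarith
  · have ht := D.triangle (F₁.biUnion Prod.fst) {y} (F₀.biUnion Prod.fst) (by simp)
    have e1 : F₁.biUnion Prod.fst ∪ {y} = F₁.biUnion Prod.fst := by
      rw [Finset.union_eq_left]; simpa using hy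
    rw [e1, ← Finset.insert_eq] at ht
    have h3 := D.delta_insert_biUnion y F₀ Prod.fst
    have h4 : ∑ p ∈ F₀, D.delta (insert y p.1) ≤ ∑ p ∈ F₀, p.2 := by
      obtain ⟨q, hq, hyq⟩ := Finset.mem_biUnion.1 hy
      exact Finset.sum_le_sum fun p hp => h q (hsub₁ q hq) y hyq p (hsub₀ p hp)
    linarith

theorem hc_of_restrict {D : Diversity X} (hB : D.Bounded) {H : Set X}
    (h : (D.restrict H).Hyperconvex) : D.HC H := by
  classical
  obtain ⟨M, hM0, hM⟩ := hB
  intro K hKH hK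
  -- the values available for a set `A`
  let V : Finset H → Set ℝ := fun A => insert M {c | (A.image Subtype.val, c) ∈ K}
  have hVnn : ∀ A, ∀ c ∈ V A, 0 ≤ c := by
    rintro A c (rfl | hc)
    · exact hM0
    · exact hK.nonneg hc
  have hVb : ∀ A, BddBelow (V A) := fun A => ⟨0, fun c hc => hVnn A c hc⟩
  have hVne : ∀ A, (V A).Nonempty := fun A => ⟨M, Or.inl rfl⟩
  let r : Finset H → ℝ := fun A => if A = ∅ then 0 else sInf (V A)
  have hr0 : ∀ A, 0 ≤ r A := by
    intro A
    by_cases hA : A = ∅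
    · simp [r, hA]
    · simp only [r, hA, if_false]
      exact le_csInf (hVne A) (hVnn A)
  have hfeas : ∀ 𝒜 : Finset (Finset H), (D.restrict H).delta (𝒜.sup id) ≤ ∑ A ∈ 𝒜, r A := by
    intro 𝒜
    set ℬ := 𝒜.filter (· ≠ ∅) with hℬ
    have hsup : 𝒜.sup id = ℬ.sup id := by
      ext x
      simp only [Finset.sup_eq_biUnion, Finset.mem_biUnion, hℬ, Finset.mem_filter, id]
      constructor
      · rintro ⟨A, hA, hx⟩
        exact ⟨A, ⟨hA, Finset.ne_empty_of_mem hx⟩, hx⟩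
      · rintro ⟨A, ⟨hA, -⟩, hx⟩
        exact ⟨A, hA, hx⟩
    have hsum : ∑ A ∈ ℬ, r A ≤ ∑ A ∈ 𝒜, r A :=
      Finset.sum_le_sum_of_subset_of_nonneg (Finset.filter_subset _ _) (fun A _ _ => hr0 A)
    refine le_trans ?_ hsum
    rw [hsup]
    refine le_of_forall_pos_le_add fun ε hε => ?_
    obtain ⟨η, hη, hηle⟩ : ∃ η : ℝ, 0 < η ∧ ℬ.card * η ≤ ε := by
      refine ⟨ε / (ℬ.card + 1), by positivity, ?_⟩
      rw [mul_div_assoc', div_le_iff₀ (by positivity)]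
      nlinarith
    have hc : ∀ A : Finset H, ∃ c, A ≠ ∅ → c ∈ V A ∧ c < r A + η := by
      intro A
      by_cases hA : A = ∅
      · exact ⟨0, fun h => absurd hA h⟩
      · obtain ⟨c, hc, hlt⟩ := exists_lt_of_csInf_lt (hVne A)
          (show sInf (V A) < sInf (V A) + η by linarith)
        exact ⟨c, fun _ => ⟨hc, by simpa [r, hA] using hlt⟩⟩
    choose c hc using hc
    have hcB : ∀ A ∈ ℬ, c A ∈ V A ∧ c A < r A + η := fun A hA => hc A (Finset.mem_filter.1 hA).2
    have hle : ∑ A ∈ ℬ, c A ≤ ∑ A ∈ ℬ, r A + ε := by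
      calc ∑ A ∈ ℬ, c A ≤ ∑ A ∈ ℬ, (r A + η) := Finset.sum_le_sum fun A hA => (hcB A hA).2.le
        _ = ∑ A ∈ ℬ, r A + ℬ.card * η := by rw [Finset.sum_add_distrib]; simp
        _ ≤ _ := by gcongr
    refine le_trans ?_ hle
    by_cases hall : ∀ A ∈ ℬ, (A.image Subtype.val, c A) ∈ K
    · have := hK (ℬ.image fun A => (A.image Subtype.val, c A)) (by
        intro p hp
        obtain ⟨A, hA, rfl⟩ := Finset.mem_image.1 (Finset.mem_coe.1 hp)
        exact hall A hA)
      rw [Finset.sum_image (by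
        intro A _ B _ hAB
        exact Finset.image_injective Subtype.val_injective (Prod.ext_iff.1 hAB).1)] at this
      refine le_trans (le_of_eq ?_) this
      change D.delta _ = _
      congr 1
      rw [Finset.sup_eq_biUnion, Finset.biUnion_image, Finset.image_biUnion]
      rfl
    · push Not at hall
      obtain ⟨A, hA, hAK⟩ := hall
      have hcA : c A = M := by
        rcases (hcB A hA).1 with h | h
        · exact h
        · exact absurd h hAK
      calc D.delta _ ≤ M := hM _
        _ = c A := hcA.symm
        _ ≤ _ := Finset.single_le_sum (f := c) (fun B hB => hVnn B _ (hcB B hB).1) hA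
  obtain ⟨z, hz⟩ := h r (by simp [r]) hfeas
  refine ⟨z.1, z.2, ?_⟩
  rintro ⟨Y, b⟩ hp
  have hYH := hKH _ hp
  have hYe : (Y.subtype (· ∈ H)).image Subtype.val = Y := by
    ext x
    simp only [Finset.mem_image, Finset.mem_subtype]
    exact ⟨fun ⟨y, hy, h⟩ => h ▸ hy, fun hx => ⟨⟨x, hYH hx⟩, hx, rfl⟩⟩
  have h1 := hz (Y.subtype (· ∈ H))
  change D.delta _ ≤ _ at h1
  rw [Finset.image_insert, hYe] at h1
  refine h1.trans ?_
  by_cases he : Y.subtype (· ∈ H) = ∅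
  · simp only [r, he, if_true]
    exact hK.nonneg hp
  · simp only [r, he, if_false]
    refine csInf_le (hVb _) (Or.inr ?_)
    change (_, b) ∈ K
    rw [hYe]
    exact hp

/-- Star bound and boundedness produce a better constant. -/
theorem better_const {D : Diversity X} {M m : ℝ} (hM : ∀ A, D.delta A ≤ M) (hm : 0 < m)
    {A : Set X} (hA : ∀ x ∈ A, ∀ y ∈ A, D.delta {x, y} ≤ m) :
    ∃ c, 0 ≤ c ∧ c < m ∧ ∀ F : Finset X, ↑F ⊆ A → D.delta F ≤ F.card * c := by
  obtain ⟨N, hN⟩ := exists_nat_ge (max 2 (2 * M / m))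
  have hN2 : (2 : ℝ) ≤ N := (le_max_left _ _).trans hN
  have hNM : 2 * M ≤ N * m := by
    have := (le_max_right _ _).trans hN
    rwa [div_le_iff₀ hm] at this
  have hNpos : (0 : ℝ) < N := by linarith
  have hdiv : m / N ≤ m / 2 := by gcongr
  have hdpos : 0 < m / N := by positivity
  have hNd : N * (m / N) = m := by field_simp
  refine ⟨m - m / N, by linarith, by linarith, fun F hF => ?_⟩
  rcases F.eq_empty_or_nonempty with rfl | ⟨z, hz⟩
  · simp [delta_empty]
  have hstar : D.delta F ≤ (F.card - 1) * m := by
    have h1 := D.delta_insert_biUnion z (F.erase z) (fun y => {y})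
    rw [Finset.biUnion_singleton_eq_self, Finset.insert_erase hz] at h1
    refine h1.trans ((Finset.sum_le_card_nsmul _ _ m ?_).trans ?_)
    · intro y hy
      exact hA z (hF hz) y (hF (Finset.mem_of_mem_erase hy))
    · rw [Finset.card_erase_of_mem hz, nsmul_eq_mul, Nat.cast_sub (Finset.card_pos.2 ⟨z, hz⟩)]
      simp
  have hcard : (1 : ℝ) ≤ F.card := by exact_mod_cast Finset.card_pos.2 ⟨z, hz⟩
  rcases le_total (F.card : ℝ) N with h | h
  · have : F.card * (m / N) ≤ N * (m / N) := by gcongr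
    nlinarith
  · have h1 := hM F
    have h2 : N * (m / 2) ≤ F.card * (m - m / N) := by
      apply mul_le_mul h (by linarith) (by linarith) (by linarith)
    linarith

/-- Solutions in `H` of the constraints of `K` with index `i`. -/
def Sol (D : Diversity X) {I : Type*} (H : I → Set X) (K : Set (I × Finset X × ℝ)) (i : I) :
    Set X :=
  {z | z ∈ H i ∧ ∀ p : Finset X × ℝ, (i, p) ∈ K → D.delta (insert z p.1) ≤ p.2}

/-- Valid systems of constraints. -/
def Valid (D : Diversity X) {I : Type*} (H : I → Set X) (K : Set (I × Finset X × ℝ)) : Prop :=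
  (∀ i p, (i, p) ∈ K → (↑p.1 : Set X) ⊆ H i) ∧ (∀ i, (D.Sol H K i).Nonempty) ∧
    ∀ i j, H i ⊆ H j → D.Sol H K i ⊆ D.Sol H K j

theorem chain_nonempty {D : Diversity X} (hB : D.Bounded) {I : Type*} [Nonempty I]
    (H : I → Set X) (hch : ∀ i j, H i ⊆ H j ∨ H j ⊆ H i) (hHC : ∀ i, D.HC (H i)) :
    (⋂ i, H i).Nonempty := by
  classical
  obtain ⟨M, hM0, hM⟩ := hB
  obtain ⟨K, hK⟩ : ∃ K, Maximal (· ∈ {K | D.Valid H K}) K := by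
    apply zorn_subset
    intro 𝒞 h𝒞 hchain
    rcases 𝒞.eq_empty_or_nonempty with rfl | hne
    · refine ⟨∅, ⟨by simp, fun i => ?_, ?_⟩, by simp⟩
      · obtain ⟨z, hz, -⟩ := hHC i ∅ (by simp) (by
          intro F hF
          have : F = ∅ := by simpa using hF
          simp [this, delta_empty])
        exact ⟨z, hz, by simp⟩
      · intro i j hij z hz
        exact ⟨hij hz.1, by simp⟩
    · refine ⟨⋃₀ 𝒞, ⟨?_, fun i => ?_, ?_⟩, fun s hs => Set.subset_sUnion_of_mem hs⟩
      · rintro i p ⟨K, hK, hp⟩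
        exact (h𝒞 hK).1 i p hp
      · obtain ⟨z, hz, h⟩ := hHC i {p | (i, p) ∈ ⋃₀ 𝒞} (by
          rintro p ⟨K, hK, hp⟩
          exact (h𝒞 hK).1 i p hp) (by
          apply feas_of_sol
          intro F hF
          have : ∃ K ∈ 𝒞, ∀ p ∈ F, (i, p) ∈ K := by
            induction F using Finset.induction_on with
            | empty => obtain ⟨K, hK⟩ := hne; exact ⟨K, hK, by simp⟩
            | insert a s ha ih =>
              rw [Finset.coe_insert, Set.insert_subset_iff] at hF
              obtain ⟨K, hK, h1⟩ := ih hF.2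
              obtain ⟨K', hK', h2⟩ := hF.1
              rcases hchain.total hK hK' with h | h
              · refine ⟨K', hK', fun p hp => ?_⟩
                rcases Finset.mem_insert.1 hp with rfl | hp
                · exact h2
                · exact h (h1 p hp)
              · refine ⟨K, hK, fun p hp => ?_⟩
                rcases Finset.mem_insert.1 hp with rfl | hp
                · exact h h2
                · exact h1 p hp
          obtain ⟨K, hK, h1⟩ := this
          obtain ⟨z, hz⟩ := (h𝒞 hK).2.1 i
          exact ⟨z, fun p hp => hz.2 p (h1 p hp)⟩)
        exact ⟨z, hz, h⟩
      · intro i j hij z hz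
        refine ⟨hij hz.1, ?_⟩
        rintro p ⟨K, hK, hp⟩
        exact ((h𝒞 hK).2.2 i j hij ⟨hz.1, fun q hq => hz.2 q ⟨K, hK, hq⟩⟩).2 p hp
  obtain ⟨hV1, hV2, hV3⟩ := hK.prop
  have hmax : ∀ L, D.Valid H (K ∪ L) → L ⊆ K := fun L hL =>
    Set.subset_union_right.trans (hK.le_of_ge hL Set.subset_union_left)
  have hSolU : ∀ L i z, z ∈ D.Sol H (K ∪ L) i ↔
      z ∈ D.Sol H K i ∧ ∀ p : Finset X × ℝ, (i, p) ∈ L → D.delta (insert z p.1) ≤ p.2 := by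
    intro L i z
    constructor
    · intro h
      exact ⟨⟨h.1, fun p hp => h.2 p (Or.inl hp)⟩, fun p hp => h.2 p (Or.inr hp)⟩
    · rintro ⟨h1, h2⟩
      exact ⟨h1.1, fun p hp => hp.elim (h1.2 p) (h2 p)⟩
  -- first consequence of maximality
  have claim : ∀ (k : I) (Y : Finset X) (c : ℝ), ↑Y ⊆ H k →
      (∀ z ∈ D.Sol H K k, D.delta (insert z Y) ≤ c) → ∀ j, H k ⊆ H j →
      ∀ z ∈ D.Sol H K j, D.delta (insert z Y) ≤ c := by
    intro k Y c hY hc j hkj z hz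
    have hval : D.Valid H (K ∪ {q | H k ⊆ H q.1 ∧ q.2 = (Y, c)}) := by
      refine ⟨?_, ?_, ?_⟩
      · rintro i p (hp | ⟨h1, h2⟩)
        · exact hV1 i p hp
        · simp only at h1 h2
          subst h2
          exact hY.trans h1
      · intro i
        by_cases hki : H k ⊆ H i
        · obtain ⟨w, hw⟩ := hV2 k
          refine ⟨w, (hSolU _ _ _).2 ⟨hV3 k i hki hw, ?_⟩⟩
          rintro p ⟨-, h2⟩
          simp only at h2
          subst h2
          exact hc w hw
        · obtain ⟨w, hw⟩ := hV2 i
          exact ⟨w, (hSolU _ _ _).2 ⟨hw, fun p hp => absurd hp.1 hki⟩⟩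
      · intro i l hil w hw
        rw [hSolU] at hw ⊢
        refine ⟨hV3 i l hil hw.1, ?_⟩
        rintro p ⟨-, h2⟩
        rcases hch k i with h | h
        · exact hw.2 p ⟨h, h2⟩
        · simp only at h2
          subst h2
          exact hc w (hV3 i k h hw.1)
    exact hz.2 (Y, c) (hmax _ hval ⟨hkj, rfl⟩)
  -- second consequence: the solution sets are singletons
  have hsub : ∀ k, ∀ x ∈ D.Sol H K k, ∀ y ∈ D.Sol H K k, x = y := by
    intro k
    let S : Set ℝ := {t | 0 ≤ t ∧ ∀ x ∈ D.Sol H K k, ∀ y ∈ D.Sol H K k, D.delta {x, y} ≤ t}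
    have hSne : S.Nonempty := ⟨M, hM0, fun _ _ _ _ => hM _⟩
    have hSb : BddBelow S := ⟨0, fun t ht => ht.1⟩
    have hmS : sInf S ∈ S :=
      ⟨le_csInf hSne fun t ht => ht.1, fun x hx y hy => le_csInf hSne fun t ht => ht.2 x hx y hy⟩
    have hm0 : sInf S = 0 := by
      by_contra hne
      have hpos : 0 < sInf S := lt_of_le_of_ne hmS.1 (Ne.symm hne)
      obtain ⟨c, hc0, hcm, hc⟩ := better_const hM hpos hmS.2
      -- the centers
      have hcen : ∀ i, H i ⊆ H k → ∃ z ∈ D.Sol H K i, ∀ x ∈ D.Sol H K i,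
          D.delta {z, x} ≤ c := by
        intro i hik
        have hK0 : D.Feas {p | (i, p) ∈ K} := by
          apply feas_of_sol
          intro F hF
          obtain ⟨z, hz⟩ := hV2 i
          exact ⟨z, fun p hp => hz.2 p (hF hp)⟩
        have hK1 : D.Feas {p | ∃ x ∈ D.Sol H K i, p = ({x}, c)} := by
          intro F hF
          have h1 := hc (F.biUnion Prod.fst) (by
            intro y hy
            obtain ⟨p, hp, hy⟩ := Finset.mem_biUnion.1 (Finset.mem_coe.1 hy)
            obtain ⟨x, hx, rfl⟩ := hF hp
            rw [Finset.mem_singleton.1 hy]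
            exact hV3 i k hik hx)
          have h2 : (F.biUnion Prod.fst).card ≤ F.card := by
            refine Finset.card_biUnion_le.trans ?_
            refine (Finset.sum_le_card_nsmul _ _ 1 ?_).trans (by simp)
            intro p hp
            obtain ⟨x, hx, rfl⟩ := hF hp
            simp
          have h3 : ∑ p ∈ F, p.2 = F.card * c := by
            rw [Finset.sum_congr rfl (g := fun _ => c)]
            · simp
            · intro p hp
              obtain ⟨x, hx, rfl⟩ := hF hp
              rfl
          rw [h3]
          refine h1.trans ?_
          gcongr
        obtain ⟨z, hz, h⟩ := hHC i _ (by
          rintro p (hp | ⟨x, hx, rfl⟩)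
          · exact hV1 i p hp
          · simpa using hx.1) (hK0.union hK1 (by
          rintro _ ⟨x, hx, rfl⟩ y hy p hp
          rw [Finset.mem_singleton.1 hy]
          exact hx.2 p hp))
        exact ⟨z, ⟨hz, fun p hp => h p (Or.inl hp)⟩, fun x hx => h ({x}, c) (Or.inr ⟨x, hx, rfl⟩)⟩
      have hup : ∀ i j, H i ⊆ H j → ∀ z ∈ D.Sol H K i,
          (∀ x ∈ D.Sol H K i, D.delta {z, x} ≤ c) → ∀ x ∈ D.Sol H K j, D.delta {z, x} ≤ c := by
        intro i j hij z hz h x hx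
        have := claim i {z} c (by simpa using hz.1) (fun w hw => by
          have := h w hw
          rwa [Finset.pair_comm] at this) j hij x hx
        rw [Finset.pair_comm]
        exact this
      have hval : D.Valid H (K ∪ {q | ∃ x ∈ D.Sol H K q.1, q.2 = ({x}, c)}) := by
        refine ⟨?_, ?_, ?_⟩
        · rintro i p (hp | ⟨x, hx, h2⟩)
          · exact hV1 i p hp
          · simp only at hx h2
            subst h2
            simpa using hx.1
        · intro i
          have : ∃ z ∈ D.Sol H K i, ∀ x ∈ D.Sol H K i, D.delta {z, x} ≤ c := by
            rcases hch i k with h | h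
            · exact hcen i h
            · obtain ⟨z, hz, hz2⟩ := hcen k (Set.Subset.refl _)
              exact ⟨z, hV3 k i h hz, hup k i h z hz hz2⟩
          obtain ⟨z, hz, hz2⟩ := this
          refine ⟨z, (hSolU _ _ _).2 ⟨hz, ?_⟩⟩
          rintro p ⟨x, hx, h2⟩
          simp only at hx h2
          subst h2
          exact hz2 x hx
        · intro i j hij w hw
          rw [hSolU] at hw ⊢
          refine ⟨hV3 i j hij hw.1, ?_⟩
          rintro p ⟨x, hx, h2⟩
          simp only at hx h2
          subst h2
          exact hup i j hij w hw.1 (fun y hy => hw.2 ({y}, c) ⟨y, hy, rfl⟩) x hx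
      have hcS : c ∈ S := by
        refine ⟨hc0, fun x hx y hy => ?_⟩
        exact hx.2 ({y}, c) (hmax _ hval ⟨y, hy, rfl⟩)
      exact absurd (csInf_le hSb hcS) (not_le.2 hcm)
    intro x hx y hy
    have h1 := hmS.2 x hx y hy
    rw [hm0] at h1
    have h2 := (D.eq_zero_iff _).1 (le_antisymm h1 (D.nonneg _))
    exact Finset.card_le_one.1 h2 x (by simp) y (by simp)
  obtain ⟨i₀⟩ := ‹Nonempty I›
  obtain ⟨z, hz⟩ := hV2 i₀
  refine ⟨z, Set.mem_iInter.2 fun j => ?_⟩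
  rcases hch i₀ j with h | h
  · exact h hz.1
  · obtain ⟨w, hw⟩ := hV2 j
    rw [hsub i₀ z hz w (hV3 j i₀ h hw)]
    exact hw.1

theorem chain_hc {D : Diversity X} (hB : D.Bounded) (𝒞 : Set (Set X)) (hne : 𝒞.Nonempty)
    (hch : ∀ s ∈ 𝒞, ∀ t ∈ 𝒞, s ⊆ t ∨ t ⊆ s) (hHC : ∀ s ∈ 𝒞, D.HC s) : D.HC (⋂₀ 𝒞) := by
  intro K hKH hK
  have : Nonempty 𝒞 := hne.to_subtype
  have hnon := chain_nonempty hB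
    (fun s : 𝒞 => {z | z ∈ s.1 ∧ ∀ p ∈ K, D.delta (insert z p.1) ≤ p.2}) (by
      intro s t
      rcases hch s.1 s.2 t.1 t.2 with h | h
      · exact Or.inl fun z hz => ⟨h hz.1, hz.2⟩
      · exact Or.inr fun z hz => ⟨h hz.1, hz.2⟩) (by
      intro s K₁ hK₁ hF
      obtain ⟨z, hz, h⟩ := hHC s.1 s.2 (K ∪ K₁) (by
        rintro p (hp | hp)
        · exact (hKH p hp).trans (Set.sInter_subset_of_mem s.2)
        · exact fun y hy => (hK₁ p hp hy).1) (hK.union hF fun q hq y hy p hp =>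
          (hK₁ q hq hy).2 p hp)
      exact ⟨z, ⟨hz, fun p hp => h p (Or.inl hp)⟩, fun p hp => h p (Or.inr hp)⟩)
  obtain ⟨z, hz⟩ := hnon
  rw [Set.mem_iInter] at hz
  obtain ⟨s⟩ := this
  exact ⟨z, fun t ht => (hz ⟨t, ht⟩).1, (hz s).2⟩

end Aux

end Diversity

/-- If `(X, δ)` is a bounded hyperconvex diversity and `(H i)_{i ∈ I}`
is a nonempty family of subsets of `X`, directed by reverse inclusion, such that each
restriction `(H i, δ)` is a hyperconvex diversity, then `⋂ i, H i` is nonempty. -/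
theorem nonempty_iInter_of_directed_hyperconvex_restrictions
    {X : Type*} [DecidableEq X] {I : Type*} [Nonempty I]
    (D : Diversity X) (hH : D.Hyperconvex) (hB : D.Bounded)
    (H : I → Set X)
    (hdir : Directed (fun s t : Set X => t ⊆ s) H)
    (hhyp : ∀ i : I, (D.restrict (H i)).Hyperconvex) :
    (⋂ i, H i).Nonempty := by
  have h := directed_of_chain D.HC (fun 𝒞 h1 h2 h3 => Diversity.chain_hc hB 𝒞 h1 h2 h3) _
    (Set.range H) rfl (Set.range_nonempty H) (by
      rintro _ ⟨i, rfl⟩ _ ⟨j, rfl⟩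
      obtain ⟨k, h1, h2⟩ := hdir i j
      exact ⟨H k, ⟨k, rfl⟩, h1, h2⟩) (by
      rintro _ ⟨i, rfl⟩
      exact Diversity.hc_of_restrict hB (hhyp i))
  obtain ⟨z, hz, -⟩ := h ∅ (by simp) (by
    intro F hF
    have : F = ∅ := by simpa using hF
    simp [this, Diversity.delta_empty])
  rw [Set.sInter_range] at hz
  exact ⟨z, hz⟩
end

section
/- Let (X, δ) be a hyperconvex diversity with induced metric d(x,y) = δ({x,y}), and let A ⊆ X be a nonempty admissible subset of the induced metric space (X, d), i.e., A is an intersection of closed balls of (X, d). Then the restricted diversity (A, δ|_A) is a hyperconvex diversity. -/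
namespace Diversity

variable {X : Type*} [DecidableEq X]

/-- The closed ball of center `x` and radius `r` of the metric space induced by a
diversity (`d(x, y) = δ {x, y}`). -/
def ball (D : Diversity X) (x : X) (r : ℝ) : Set X :=
  {y : X | D.delta {x, y} ≤ r}

/-- A subset of `X` is admissible (with respect to the metric induced by the diversity)
if it is an intersection of closed balls. -/
def IsAdmissible (D : Diversity X) (A : Set X) : Prop :=
  ∃ s : Set (X × ℝ), A = ⋂ p ∈ s, D.ball p.1 p.2

end Diversity

namespace Diversity

variable {X : Type*} [DecidableEq X]

theorem le_insert (D : Diversity X) (b : X) (V : Finset X) :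
    D.delta V ≤ D.delta (insert b V) := by
  have h := D.triangle V {b} ∅ (Finset.singleton_nonempty b)
  have h0 : D.delta {b} = 0 := (D.eq_zero_iff _).2 (by simp)
  have e : V ∪ {b} = insert b V := by ext; simp [or_comm]
  rw [Finset.union_empty, Finset.union_empty, h0, e] at h
  linarith

theorem union_sup_le (D : Diversity X) (a : X) (V : Finset X) (ha : a ∈ V)
    (C : Finset (Finset X)) :
    D.delta (V ∪ C.sup id) ≤ D.delta V + ∑ Y ∈ C, D.delta (insert a Y) := by
  induction C using Finset.induction_on with
  | empty => simp
  | insert Y C hY ih =>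
    rw [Finset.sum_insert hY, Finset.sup_insert]
    have h := D.triangle (V ∪ C.sup id) {a} Y (Finset.singleton_nonempty a)
    have e1 : (V ∪ C.sup id) ∪ Y = V ∪ (id Y ⊔ C.sup id) := by
      rw [Finset.union_assoc, Finset.union_comm (C.sup id) Y]; rfl
    have e2 : (V ∪ C.sup id) ∪ {a} = V ∪ C.sup id := by
      apply Finset.union_eq_left.2
      simp [ha]
    have e3 : ({a} : Finset X) ∪ Y = insert a Y := by ext; simp
    rw [e1, e2, e3] at h
    linarith

/-- Admissible upper bounds for the extended function. -/
def Opt (D : Diversity X) (A : Set X) (s : Set (X × ℝ)) (r : Finset A → ℝ) (a0 : A)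
    (Y : Finset X) (v : ℝ) : Prop :=
  (∃ B : Finset A, Y = B.image Subtype.val ∧ v = r B) ∨
  (∃ p ∈ s, Y = {p.1} ∧ v = p.2) ∨
  v = r {a0} + D.delta (insert (a0 : X) Y)

theorem opt_sum (D : Diversity X) (A : Set X) (s : Set (X × ℝ))
    (hs : ∀ a ∈ A, ∀ p ∈ s, D.delta {p.1, a} ≤ p.2)
    (r : Finset A → ℝ)
    (hr : ∀ 𝒜 : Finset (Finset A), D.delta ((𝒜.sup id).image Subtype.val) ≤ ∑ B ∈ 𝒜, r B)
    (hnn : ∀ B, 0 ≤ r B)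
    (a0 : A) (w : Finset X → ℝ) (hw : ∀ Y, Opt D A s r a0 Y (w Y))
    (𝒜 : Finset (Finset X)) : D.delta (𝒜.sup id) ≤ ∑ Y ∈ 𝒜, w Y := by
  classical
  let T : Finset X → Prop := fun Y => ∃ B : Finset A, Y = B.image Subtype.val ∧ w Y = r B
  have hinj : Function.Injective (fun B : Finset A => B.image (Subtype.val : A → X)) :=
    Finset.image_injective Subtype.val_injective
  obtain ⟨ℬ, hℬ⟩ : ∃ ℬ : Finset (Finset A),
      ℬ.image (fun B => B.image Subtype.val) = 𝒜.filter T := by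
    have : ((𝒜.filter T : Finset (Finset X)) : Set (Finset X)) ⊆
        (fun B : Finset A => B.image (Subtype.val : A → X)) '' Set.univ := by
      intro Y hY
      obtain ⟨_, B, hB, _⟩ := Finset.mem_filter.1 (Finset.mem_coe.1 hY)
      exact ⟨B, trivial, hB.symm⟩
    obtain ⟨ℬ, _, h⟩ := Finset.subset_set_image_iff.1 this
    exact ⟨ℬ, h⟩
  have hwB : ∀ B ∈ ℬ, w (B.image Subtype.val) = r B := by
    intro B hB
    have h1 : B.image Subtype.val ∈ 𝒜.filter T := by
      rw [← hℬ]; exact Finset.mem_image_of_mem _ hB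
    obtain ⟨_, B', hB', h2⟩ := Finset.mem_filter.1 h1
    rw [h2, hinj hB']
  have hsum1 : ∑ Y ∈ 𝒜.filter T, w Y = ∑ B ∈ ℬ, r B := by
    rw [← hℬ, Finset.sum_image (fun x _ y _ h => hinj h)]
    exact Finset.sum_congr rfl hwB
  have hsup1 : (𝒜.filter T).sup id = (ℬ.sup id).image Subtype.val := by
    rw [← hℬ]
    ext x
    simp only [Finset.mem_sup, Finset.mem_image, id]
    constructor
    · rintro ⟨_, ⟨B, hB, rfl⟩, hx⟩
      obtain ⟨y, hy, rfl⟩ := Finset.mem_image.1 hx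
      exact ⟨y, ⟨B, hB, hy⟩, rfl⟩
    · rintro ⟨y, ⟨B, hB, hy⟩, rfl⟩
      exact ⟨_, ⟨B, hB, rfl⟩, Finset.mem_image_of_mem _ hy⟩
  set C := 𝒜.filter (fun Y => ¬ T Y) with hC
  have hsplit : ∑ Y ∈ 𝒜, w Y = ∑ B ∈ ℬ, r B + ∑ Y ∈ C, w Y := by
    rw [← hsum1, Finset.sum_filter_add_sum_filter_not]
  have hsup : 𝒜.sup id = (ℬ.sup id).image Subtype.val ∪ C.sup id := by
    rw [← hsup1, ← Finset.sup_eq_union, ← Finset.sup_union, hC,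
      Finset.filter_union_filter_not_eq]
  have hCopt : ∀ Y ∈ C, (∃ p ∈ s, Y = {p.1} ∧ w Y = p.2) ∨
      w Y = r {a0} + D.delta (insert (a0 : X) Y) := by
    intro Y hY
    rcases hw Y with h | h
    · exact absurd h (Finset.mem_filter.1 hY).2
    · exact h
  have hball : ∀ a ∈ A, ∀ Y, (∃ p ∈ s, Y = {p.1} ∧ w Y = p.2) →
      D.delta (insert a Y) ≤ w Y := by
    rintro a ha Y ⟨p, hp, rfl, h⟩
    rw [h, Finset.pair_comm]
    exact hs a ha p hp
  rw [hsplit, hsup]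
  by_cases h3 : ∃ Y ∈ C, w Y = r {a0} + D.delta (insert (a0 : X) Y)
  · obtain ⟨Y0, hY0, hw0⟩ := h3
    have hV : D.delta (insert (a0 : X) ((ℬ.sup id).image Subtype.val)) ≤
        ∑ B ∈ ℬ, r B + r {a0} := by
      have h := hr (insert {a0} ℬ)
      have e : ((insert {a0} ℬ : Finset (Finset A)).sup id).image Subtype.val =
          insert (a0 : X) ((ℬ.sup id).image Subtype.val) := by
        rw [Finset.sup_insert, Finset.sup_eq_union, Finset.image_union]
        ext; simp
      rw [e] at h
      refine h.trans ?_
      by_cases hm : ({a0} : Finset A) ∈ ℬ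
      · rw [Finset.insert_eq_of_mem hm]; linarith [hnn {a0}]
      · rw [Finset.sum_insert hm]; linarith
    have h1 := D.union_sup_le a0 (insert (a0 : X) ((ℬ.sup id).image Subtype.val))
      (Finset.mem_insert_self _ _) C
    have h2 : ∑ Y ∈ C, D.delta (insert (a0 : X) Y) + r {a0} ≤ ∑ Y ∈ C, w Y := by
      rw [← Finset.add_sum_erase C _ hY0, ← Finset.add_sum_erase C w hY0, hw0]
      have : ∑ Y ∈ C.erase Y0, D.delta (insert (a0 : X) Y) ≤ ∑ Y ∈ C.erase Y0, w Y := by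
        apply Finset.sum_le_sum
        intro Y hY
        rcases hCopt Y (Finset.mem_of_mem_erase hY) with h | h
        · exact hball a0 a0.2 Y h
        · rw [h]; linarith [hnn {a0}]
      linarith
    have h4 := D.le_insert a0 ((ℬ.sup id).image Subtype.val ∪ C.sup id)
    rw [← Finset.insert_union] at h4
    linarith
  · have hC2 : ∀ a ∈ A, ∑ Y ∈ C, D.delta (insert a Y) ≤ ∑ Y ∈ C, w Y := by
      intro a ha
      apply Finset.sum_le_sum
      intro Y hY
      rcases hCopt Y hY with h | h
      · exact hball a ha Y h
      · exact absurd ⟨Y, hY, h⟩ h3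
    rcases ((ℬ.sup id).image (Subtype.val : A → X)).eq_empty_or_nonempty with h | ⟨a, ha⟩
    · rw [h]
      have h1 := D.union_sup_le a0 {(a0 : X)} (by simp) C
      have h0 : D.delta {(a0 : X)} = 0 := (D.eq_zero_iff _).2 (by simp)
      have h4 := D.le_insert a0 (C.sup id)
      have e3 : ({(a0 : X)} : Finset X) ∪ C.sup id = insert (a0 : X) (C.sup id) := by
        ext; simp
      rw [e3] at h1
      have h5 := Finset.sum_nonneg (s := ℬ) (fun B _ => hnn B)
      have h6 := hC2 a0 a0.2
      rw [Finset.empty_union]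
      linarith
    · have haA : a ∈ A := by
        obtain ⟨y, _, rfl⟩ := Finset.mem_image.1 ha
        exact y.2
      have h1 := D.union_sup_le a _ ha C
      have h2 := hr ℬ
      have h3 := hC2 a haA
      linarith

end Diversity

theorem restrict_hyperconvex_of_admissible
    {X : Type*} [DecidableEq X] (D : Diversity X)
    (hH : D.Hyperconvex)
    (A : Set X) (hAne : A.Nonempty) (hAadm : D.IsAdmissible A) :
    (D.restrict A).Hyperconvex := by
  obtain ⟨s, hAs⟩ := hAadm
  obtain ⟨a, haA⟩ := hAne
  intro r hr0 hr
  have hs : ∀ a ∈ A, ∀ p ∈ s, D.delta {p.1, a} ≤ p.2 := by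
    intro a ha p hp
    rw [hAs] at ha
    exact Set.mem_iInter₂.1 ha p hp
  have hnn : ∀ B, 0 ≤ r B := by
    intro B
    have h := hr {B}
    rw [Finset.sum_singleton] at h
    exact ((D.restrict A).nonneg _).trans h
  let a0 : A := ⟨a, haA⟩
  let P := Diversity.Opt D A s r a0
  have hP0 : ∀ Y v, P Y v → 0 ≤ v := by
    rintro Y v (⟨B, _, rfl⟩ | ⟨p, hp, _, rfl⟩ | rfl)
    · exact hnn B
    · exact (D.nonneg _).trans (hs a haA p hp)
    · exact add_nonneg (hnn _) (D.nonneg _)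
  have hbdd : ∀ Y, BddBelow {v | P Y v} := fun Y => ⟨0, fun v hv => hP0 Y v hv⟩
  have hne : ∀ Y, {v | P Y v}.Nonempty := fun Y => ⟨_, Or.inr (Or.inr rfl)⟩
  have hle : ∀ Y v, P Y v → sInf {v | P Y v} ≤ v := fun Y v hv => csInf_le (hbdd Y) hv
  obtain ⟨z, hz⟩ := hH (fun Y => sInf {v | P Y v})
    (le_antisymm (hle ∅ 0 (Or.inl ⟨∅, by simp, hr0.symm⟩))
      (le_csInf (hne _) (fun v hv => hP0 _ v hv)))
    (by
      intro 𝒜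
      apply le_of_forall_pos_le_add
      intro ε hε
      have hc : (0 : ℝ) < 𝒜.card + 1 := by positivity
      have hex : ∀ Y, ∃ v, P Y v ∧ v < sInf {v | P Y v} + ε / (𝒜.card + 1) := by
        intro Y
        obtain ⟨v, hv, hlt⟩ := exists_lt_of_csInf_lt (hne Y)
          (lt_add_of_pos_right (sInf {v | P Y v}) (div_pos hε hc))
        exact ⟨v, hv, hlt⟩
      choose w hw hwlt using hex
      have h1 := Diversity.opt_sum D A s hs r (fun ℬ => hr ℬ) hnn a0 w hw 𝒜
      have h2 : ∑ Y ∈ 𝒜, w Y ≤ ∑ Y ∈ 𝒜, (sInf {v | P Y v} + ε / (𝒜.card + 1)) :=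
        Finset.sum_le_sum (fun Y _ => (hwlt Y).le)
      rw [Finset.sum_add_distrib, Finset.sum_const, nsmul_eq_mul] at h2
      have h3 : (𝒜.card : ℝ) * (ε / (𝒜.card + 1)) ≤ ε := by
        rw [mul_div_assoc', div_le_iff₀ hc]
        nlinarith
      linarith)
  have hzA : z ∈ A := by
    rw [hAs]
    refine Set.mem_iInter₂.2 fun p hp => ?_
    have h := (hz {p.1}).trans (hle {p.1} p.2 (Or.inr (Or.inl ⟨p, hp, rfl, rfl⟩)))
    rw [Finset.pair_comm] at h
    exact h
  refine ⟨⟨z, hzA⟩, fun B => ?_⟩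
  have h := (hz (B.image Subtype.val)).trans (hle _ (r B) (Or.inl ⟨B, rfl, rfl⟩))
  change D.delta ((insert _ B).image Subtype.val) ≤ r B
  rw [Finset.image_insert]
  exact h
end

section
/- There exist a hyperconvex diversity (X, δ) whose induced metric space (X, d) is bounded, and a mapping T : X → X that is nonexpansive with respect to d but has no fixed point. In particular, the induced metric space of a hyperconvex diversity, even when bounded, need not have the fixed point property for nonexpansive mappings. -/
namespace CapDiv

/-- Nonnegative superadditive set functions on finite sets of integers bounded by `1`. -/
structure IsCap (g : Finset ℤ → ℝ) : Prop where
  nonneg : ∀ A, 0 ≤ g A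
  super : ∀ A B, Disjoint A B → g A + g B ≤ g (A ∪ B)
  le_one : ∀ A, g A ≤ 1

/-- The maximal ones, characterised by approximate complementation. -/
structure IsMaxCap (g : Finset ℤ → ℝ) : Prop extends IsCap g where
  compl : ∀ A, ∀ ε : ℝ, 0 < ε → ∃ B, Disjoint A B ∧ 1 - ε ≤ g A + g B

def W : Type := {g : Finset ℤ → ℝ // IsMaxCap g}

noncomputable instance : DecidableEq W := Classical.decEq _

theorem IsCap.mono {g : Finset ℤ → ℝ} (h : IsCap g) {A B : Finset ℤ} (hAB : A ⊆ B) : g A ≤ g B := by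
  have h1 := h.super A (B \ A) Finset.disjoint_sdiff
  rw [Finset.union_sdiff_of_subset hAB] at h1
  linarith [h.nonneg (B \ A)]

theorem IsCap.sum_filter {g : Finset ℤ → ℝ} (h : IsCap g) {J : Type*} [DecidableEq J]
    (s : Finset J) (A : Finset ℤ) (c : ℤ → J) :
    ∑ j ∈ s, g (A.filter (fun i => c i = j)) ≤ g (A.filter (fun i => c i ∈ s)) := by
  induction s using Finset.induction_on with
  | empty => simpa using h.nonneg _
  | insert a s ha ih =>
    rw [Finset.sum_insert ha]
    have h1 := h.super (A.filter (fun i => c i = a)) (A.filter (fun i => c i ∈ s)) (by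
      rw [Finset.disjoint_left]
      intro i hi hi'
      simp only [Finset.mem_filter] at hi hi'
      exact ha (hi.2 ▸ hi'.2))
    have h2 : A.filter (fun i => c i = a) ∪ A.filter (fun i => c i ∈ s)
        = A.filter (fun i => c i ∈ insert a s) := by
      ext i
      simp only [Finset.mem_union, Finset.mem_filter, Finset.mem_insert]
      tauto
    rw [h2] at h1
    linarith

/-- Every superadditive function is below a maximal one. -/
theorem IsCap.exists_max {g : Finset ℤ → ℝ} (h : IsCap g) : ∃ z, IsMaxCap z ∧ ∀ A, g A ≤ z A := by
  obtain ⟨z, hgz, hz⟩ := zorn_le_nonempty₀ {f : Finset ℤ → ℝ | IsCap f} (by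
    intro c hc hch y hy
    have hbdd : ∀ A, BddAbove (Set.range fun f : c => f.1 A) := by
      intro A
      refine ⟨1, ?_⟩
      rintro _ ⟨f, rfl⟩
      exact (hc f.2).le_one A
    have : Nonempty c := ⟨⟨y, hy⟩⟩
    refine ⟨fun A => ⨆ f : c, f.1 A, ⟨?_, ?_, ?_⟩, ?_⟩
    · intro A
      exact le_trans ((hc hy).nonneg A) (le_ciSup (hbdd A) ⟨y, hy⟩)
    · intro A B hAB
      have key : ∀ f f' : c, f.1 A + f'.1 B ≤ ⨆ f : c, f.1 (A ∪ B) := by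
        intro f f'
        rcases hch.total f.2 f'.2 with hl | hl
        · have := (hc f'.2).super A B hAB
          have h2 := le_ciSup (hbdd (A ∪ B)) f'
          have h3 := hl A
          linarith
        · have := (hc f.2).super A B hAB
          have h2 := le_ciSup (hbdd (A ∪ B)) f
          have h3 := hl B
          linarith
      have h1 : ∀ f' : c, (⨆ f : c, f.1 A) ≤ (⨆ f : c, f.1 (A ∪ B)) - f'.1 B := by
        intro f'
        exact ciSup_le fun f => by linarith [key f f']
      have h2 : (⨆ f : c, f.1 B) ≤ (⨆ f : c, f.1 (A ∪ B)) - (⨆ f : c, f.1 A) :=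
        ciSup_le fun f => by linarith [h1 f]
      linarith
    · intro A
      exact ciSup_le fun f => (hc f.2).le_one A
    · intro f hf A
      exact le_ciSup (hbdd A) ⟨f, hf⟩) g h
  have hzc : IsCap z := hz.prop
  have hne : ∀ A : Finset ℤ, A.Nonempty → ∀ ε : ℝ, 0 < ε → ∃ B, Disjoint A B ∧ 1 - ε ≤ z A + z B := by
    intro A hA ε hε
    by_contra hcon
    push Not at hcon
    let z' : Finset ℤ → ℝ := fun C => if A ⊆ C then max (z C) (z A + ε + z (C \ A)) else z C
    have hle : ∀ C, z C ≤ z' C := by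
      intro C
      simp only [z']
      split_ifs
      · exact le_max_left _ _
      · exact le_rfl
    have hstep : ∀ C C', Disjoint C C' → A ⊆ C → z' C + z C' ≤ z' (C ∪ C') := by
      intro C C' hd hAC
      have hAU : A ⊆ C ∪ C' := hAC.trans Finset.subset_union_left
      simp only [z', if_pos hAC, if_pos hAU]
      have h1 := hzc.super C C' hd
      have h2 := hzc.super (C \ A) C' (hd.mono_left Finset.sdiff_subset)
      have h3 : (C \ A) ∪ C' = (C ∪ C') \ A := by
        rw [Finset.union_sdiff_distrib, Finset.sdiff_eq_self_of_disjoint (hd.mono_left hAC).symm]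
      rw [h3] at h2
      rcases max_cases (z C) (z A + ε + z (C \ A)) with ⟨he, -⟩ | ⟨he, -⟩ <;> rw [he]
      · exact le_trans h1 (le_max_left _ _)
      · refine le_trans ?_ (le_max_right _ _)
        linarith
    have hz' : IsCap z' := by
      refine ⟨fun C => (hzc.nonneg C).trans (hle C), ?_, ?_⟩
      · intro C C' hd
        by_cases hC : A ⊆ C
        · have hC' : ¬ A ⊆ C' := by
            intro hC'
            obtain ⟨a, ha⟩ := hA
            exact Finset.disjoint_left.1 hd (hC ha) (hC' ha)
          have : z' C' = z C' := by simp only [z', if_neg hC']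
          rw [this]
          exact hstep C C' hd hC
        · have hCe : z' C = z C := by simp only [z', if_neg hC]
          by_cases hC' : A ⊆ C'
          · rw [hCe, add_comm, Finset.union_comm]
            exact hstep C' C hd.symm hC'
          · have hCe' : z' C' = z C' := by simp only [z', if_neg hC']
            rw [hCe, hCe']
            exact (hzc.super C C' hd).trans (hle _)
      · intro C
        simp only [z']
        split_ifs with hC
        · refine max_le (hzc.le_one C) ?_
          have := hcon (C \ A) Finset.disjoint_sdiff
          linarith
        · exact hzc.le_one C
    have h1 : z' ≤ z := hz.le_of_ge hz' hle
    have h2 := h1 A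
    simp only [z', if_pos (Finset.Subset.refl A)] at h2
    have h3 := (le_max_right _ _).trans h2
    linarith [hzc.nonneg (A \ A)]
  refine ⟨z, ⟨hzc, ?_⟩, hgz⟩
  intro A ε hε
  rcases A.eq_empty_or_nonempty with rfl | hA
  · obtain ⟨B, hB, hB'⟩ := hne {0} (Finset.singleton_nonempty 0) ε hε
    refine ⟨{0} ∪ B, Finset.disjoint_empty_left _, ?_⟩
    linarith [hzc.super _ _ hB, hzc.nonneg ∅]
  · exact hne A hA ε hε

/-- Value of a colouring. -/
noncomputable def val (F : Finset W) (p : Finset ℤ × (ℤ → W)) : ℝ :=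
  ∑ w ∈ F, w.1 (p.1.filter (fun i => p.2 i = w))

theorem val_bdd (F : Finset W) : BddAbove (Set.range (val F)) := by
  refine ⟨F.card, ?_⟩
  rintro _ ⟨p, rfl⟩
  calc val F p ≤ ∑ w ∈ F, (1 : ℝ) := Finset.sum_le_sum fun w _ => w.2.le_one _
    _ = F.card := by simp

noncomputable def delta (F : Finset W) : ℝ := max 0 ((⨆ p, val F p) - 1)

theorem delta_nonneg (F : Finset W) : 0 ≤ delta F := le_max_left _ _

theorem val_le (F : Finset W) (p) : val F p ≤ 1 + delta F := by
  have h1 := le_ciSup (val_bdd F) p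
  have h2 : (⨆ p, val F p) - 1 ≤ delta F := le_max_right _ _
  linarith

theorem exists_W : Nonempty W := by
  have h : IsCap (fun _ => 0) := ⟨fun _ => le_rfl, fun _ _ _ => by simp, fun _ => by simp⟩
  obtain ⟨z, hz, -⟩ := h.exists_max
  exact ⟨⟨z, hz⟩⟩

theorem delta_le (F : Finset W) (c : ℝ) (hc : 0 ≤ c) (h : ∀ p, val F p ≤ 1 + c) : delta F ≤ c := by
  have := exists_W
  refine max_le hc ?_
  have := ciSup_le h
  linarith

theorem gen (A F : Finset W) (hAF : A ⊆ F) (b : W) (hb : b ∈ F) (E E' : Finset ℤ)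
    (hd : Disjoint E E') (c : ℤ → W) :
    ∑ w ∈ A, w.1 (E.filter (fun i => c i = w)) + b.1 E' ≤ 1 + delta F := by
  let c1 : ℤ → W := fun i => if i ∈ E' then b else c i
  refine le_trans ?_ (val_le F (E ∪ E', c1))
  have h1 : ∀ w ∈ F, w.1 (E.filter (fun i => c i = w)) + (if w = b then b.1 E' else 0)
      ≤ w.1 ((E ∪ E').filter (fun i => c1 i = w)) := by
    intro w _
    have hs1 : E.filter (fun i => c i = w) ⊆ (E ∪ E').filter (fun i => c1 i = w) := by
      intro i hi
      rw [Finset.mem_filter] at hi ⊢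
      refine ⟨Finset.mem_union_left _ hi.1, ?_⟩
      simp only [c1, if_neg (Finset.disjoint_left.1 hd hi.1), hi.2]
    split_ifs with hw
    · subst hw
      refine le_trans (w.2.super _ _ (hd.mono_left (Finset.filter_subset _ _))) (w.2.mono ?_)
      refine Finset.union_subset hs1 ?_
      intro i hi
      rw [Finset.mem_filter]
      refine ⟨Finset.mem_union_right _ hi, ?_⟩
      simp only [c1, if_pos hi]
    · rw [add_zero]
      exact w.2.mono hs1
  have h2 := Finset.sum_le_sum h1
  rw [Finset.sum_add_distrib, Finset.sum_ite_eq' F b, if_pos hb] at h2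
  have h3 : ∑ w ∈ A, w.1 (E.filter (fun i => c i = w))
      ≤ ∑ w ∈ F, w.1 (E.filter (fun i => c i = w)) :=
    Finset.sum_le_sum_of_subset_of_nonneg hAF fun w _ _ => w.2.nonneg _
  unfold val
  simp only
  linarith

theorem gen_pair {F : Finset W} {x y : W} (hx : x ∈ F) (hy : y ∈ F) {E E' : Finset ℤ}
    (hd : Disjoint E E') : x.1 E + y.1 E' ≤ 1 + delta F := by
  have := gen {x} F (by simpa using hx) y hy E E' hd (fun _ => x)
  simpa using this

theorem le_of_pair {x y : W} (h : ∀ E E', Disjoint E E' → x.1 E + y.1 E' ≤ 1) (A : Finset ℤ) :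
    x.1 A ≤ y.1 A := by
  refine le_of_forall_pos_le_add fun ε hε => ?_
  obtain ⟨B, hB, hB'⟩ := y.2.compl A ε hε
  linarith [h A B hB]

theorem delta_triangle (A B C : Finset W) (hB : B.Nonempty) :
    delta (A ∪ C) ≤ delta (A ∪ B) + delta (B ∪ C) := by
  obtain ⟨b, hb⟩ := hB
  refine delta_le _ _ (add_nonneg (delta_nonneg _) (delta_nonneg _)) ?_
  rintro ⟨E, c⟩
  refine le_of_forall_pos_le_add fun ε hε => ?_
  set PA := E.filter (fun i => c i ∈ A)
  set PC := E.filter (fun i => c i ∉ A)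
  obtain ⟨B1, hB1, hB1'⟩ := b.2.compl PA ε hε
  have h1 := gen A (A ∪ B) Finset.subset_union_left b (Finset.mem_union_right _ hb) PA B1 hB1 c
  have h2 := gen (C \ A) (B ∪ C) (Finset.sdiff_subset.trans Finset.subset_union_right) b
    (Finset.mem_union_left _ hb) PC PA (Finset.disjoint_filter_filter_not E E _).symm c
  have e1 : ∑ w ∈ A, w.1 (PA.filter (fun i => c i = w)) = ∑ w ∈ A, w.1 (E.filter (fun i => c i = w)) := by
    refine Finset.sum_congr rfl fun w hw => ?_
    refine congrArg w.1 ?_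
    ext i
    simp only [PA, Finset.mem_filter]
    constructor
    · rintro ⟨⟨a, _⟩, b⟩
      exact ⟨a, b⟩
    · rintro ⟨a, b⟩
      exact ⟨⟨a, b ▸ hw⟩, b⟩
  have e2 : ∑ w ∈ C \ A, w.1 (PC.filter (fun i => c i = w))
      = ∑ w ∈ C \ A, w.1 (E.filter (fun i => c i = w)) := by
    refine Finset.sum_congr rfl fun w hw => ?_
    refine congrArg w.1 ?_
    ext i
    simp only [PC, Finset.mem_filter]
    constructor
    · rintro ⟨⟨a, _⟩, b⟩
      exact ⟨a, b⟩
    · rintro ⟨a, b⟩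
      exact ⟨⟨a, b ▸ (Finset.mem_sdiff.1 hw).2⟩, b⟩
  have e3 : val (A ∪ C) (E, c) = ∑ w ∈ A, w.1 (E.filter (fun i => c i = w))
      + ∑ w ∈ C \ A, w.1 (E.filter (fun i => c i = w)) := by
    unfold val
    rw [← Finset.union_sdiff_self_eq_union, Finset.sum_union Finset.disjoint_sdiff]
  rw [e1] at h1
  rw [e2] at h2
  rw [e3]
  linarith

theorem delta_eq_zero_iff (F : Finset W) : delta F = 0 ↔ F.card ≤ 1 := by
  constructor
  · intro h
    rw [Finset.card_le_one]
    intro x hx y hy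
    have hxy : ∀ E E', Disjoint E E' → x.1 E + y.1 E' ≤ 1 := by
      intro E E' hd
      have := gen_pair hx hy hd
      rw [h] at this
      linarith
    apply Subtype.ext
    funext A
    exact le_antisymm (le_of_pair hxy A)
      (le_of_pair (fun E E' hd => by linarith [hxy E' E hd.symm]) A)
  · intro h
    refine le_antisymm (delta_le _ _ le_rfl fun p => ?_) (delta_nonneg _)
    calc val F p ≤ ∑ w ∈ F, (1 : ℝ) := Finset.sum_le_sum fun w _ => w.2.le_one _
      _ = F.card := by simp
      _ ≤ 1 + 0 := by
        rw [add_zero]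
        exact_mod_cast h

noncomputable def D : Diversity W where
  delta := delta
  nonneg := delta_nonneg
  eq_zero_iff := delta_eq_zero_iff
  triangle := delta_triangle

/-- Value of a two-level colouring of `C`. -/
noncomputable def hval (r : Finset W → ℝ) (C : Finset ℤ)
    (p : Finset (Finset W) × (ℤ → Finset W × W)) : ℝ :=
  ∑ Y ∈ p.1, ∑ y ∈ Y, y.1 (C.filter (fun i => p.2 i = (Y, y))) - ∑ Y ∈ p.1, r Y

theorem hval_le (r : Finset W → ℝ)
    (hr : ∀ 𝒜 : Finset (Finset W), delta (𝒜.sup id) ≤ ∑ A ∈ 𝒜, r A) (C : Finset ℤ) (p) :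
    hval r C p ≤ 1 := by
  obtain ⟨𝒴, c⟩ := p
  have h1 := val_le (𝒴.sup id) (C, fun i => (c i).2)
  have h2 := hr 𝒴
  have h3 : ∑ Y ∈ 𝒴, ∑ y ∈ Y, y.1 (C.filter (fun i => c i = (Y, y))) ≤
      val (𝒴.sup id) (C, fun i => (c i).2) := by
    calc _ ≤ ∑ Y ∈ 𝒴, ∑ y ∈ 𝒴.sup id, y.1 (C.filter (fun i => c i = (Y, y))) := by
          refine Finset.sum_le_sum fun Y hY => ?_
          exact Finset.sum_le_sum_of_subset_of_nonneg (Finset.le_sup (f := id) hY)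
            fun y _ _ => y.2.nonneg _
      _ = ∑ y ∈ 𝒴.sup id, ∑ Y ∈ 𝒴, y.1 (C.filter (fun i => c i = (Y, y))) := Finset.sum_comm
      _ ≤ _ := by
          refine Finset.sum_le_sum fun y _ => ?_
          have h4 := y.2.sum_filter 𝒴 (C.filter (fun i => (c i).2 = y)) (fun i => (c i).1)
          refine le_trans (le_of_eq ?_) (h4.trans (y.2.mono (Finset.filter_subset _ _)))
          refine Finset.sum_congr rfl fun Y _ => ?_
          refine congrArg y.1 ?_
          ext i
          simp only [Finset.mem_filter, Prod.ext_iff]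
          tauto
  unfold hval
  simp only
  linarith

theorem hval_super (r : Finset W → ℝ) (hr0 : ∀ Y, 0 ≤ r Y) (C C' : Finset ℤ) (hd : Disjoint C C')
    (p p') : ∃ q, hval r C p + hval r C' p' ≤ hval r (C ∪ C') q := by
  obtain ⟨𝒴, c⟩ := p
  obtain ⟨𝒴', c'⟩ := p'
  refine ⟨(𝒴 ∪ 𝒴', fun i => if i ∈ C then c i else c' i), ?_⟩
  have h1 : ∀ Y ∈ 𝒴 ∪ 𝒴', ∑ y ∈ Y, y.1 (C.filter (fun i => c i = (Y, y)))
      + ∑ y ∈ Y, y.1 (C'.filter (fun i => c' i = (Y, y))) ≤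
      ∑ y ∈ Y, y.1 ((C ∪ C').filter (fun i => (if i ∈ C then c i else c' i) = (Y, y))) := by
    intro Y _
    rw [← Finset.sum_add_distrib]
    refine Finset.sum_le_sum fun y _ => ?_
    refine le_trans (y.2.super _ _ (hd.mono (Finset.filter_subset _ _) (Finset.filter_subset _ _)))
      (y.2.mono (Finset.union_subset ?_ ?_))
    · intro i hi
      rw [Finset.mem_filter] at hi ⊢
      exact ⟨Finset.mem_union_left _ hi.1, by rw [if_pos hi.1]; exact hi.2⟩
    · intro i hi
      rw [Finset.mem_filter] at hi ⊢
      exact ⟨Finset.mem_union_right _ hi.1, by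
        rw [if_neg (Finset.disjoint_right.1 hd hi.1)]; exact hi.2⟩
  have h2 := Finset.sum_le_sum h1
  rw [Finset.sum_add_distrib] at h2
  have h3 : ∑ Y ∈ 𝒴, ∑ y ∈ Y, y.1 (C.filter (fun i => c i = (Y, y))) ≤
      ∑ Y ∈ 𝒴 ∪ 𝒴', ∑ y ∈ Y, y.1 (C.filter (fun i => c i = (Y, y))) :=
    Finset.sum_le_sum_of_subset_of_nonneg Finset.subset_union_left
      fun Y _ _ => Finset.sum_nonneg fun y _ => y.2.nonneg _
  have h4 : ∑ Y ∈ 𝒴', ∑ y ∈ Y, y.1 (C'.filter (fun i => c' i = (Y, y))) ≤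
      ∑ Y ∈ 𝒴 ∪ 𝒴', ∑ y ∈ Y, y.1 (C'.filter (fun i => c' i = (Y, y))) :=
    Finset.sum_le_sum_of_subset_of_nonneg Finset.subset_union_right
      fun Y _ _ => Finset.sum_nonneg fun y _ => y.2.nonneg _
  have h5 : ∑ Y ∈ 𝒴 ∪ 𝒴', r Y ≤ ∑ Y ∈ 𝒴, r Y + ∑ Y ∈ 𝒴', r Y := by
    rw [← Finset.sum_union_inter]
    linarith [Finset.sum_nonneg fun Y (_ : Y ∈ 𝒴 ∩ 𝒴') => hr0 Y]
  unfold hval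
  simp only
  linarith

theorem hyperconvex : D.Hyperconvex := by
  intro r _ hr
  change ∀ 𝒜 : Finset (Finset W), delta (𝒜.sup id) ≤ ∑ A ∈ 𝒜, r A at hr
  change ∃ z : W, ∀ Y : Finset W, delta (insert z Y) ≤ r Y
  have hrd : ∀ Y, delta Y ≤ r Y := fun Y => by simpa using hr {Y}
  have hr0 : ∀ Y, 0 ≤ r Y := fun Y => (delta_nonneg Y).trans (hrd Y)
  have := exists_W
  have hbdd : ∀ C, BddAbove (Set.range (hval r C)) := by
    intro C
    refine ⟨1, ?_⟩
    rintro _ ⟨p, rfl⟩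
    exact hval_le r hr C p
  have hv : IsCap (fun C => ⨆ p, hval r C p) := by
    refine ⟨fun C => ?_, fun C C' hd => ?_, fun C => ciSup_le (hval_le r hr C)⟩
    · refine le_trans (le_of_eq ?_) (le_ciSup (hbdd C) (∅, fun _ => (∅, Classical.arbitrary W)))
      simp [hval]
    · have h1 : ∀ p', (⨆ p, hval r C p) ≤ (⨆ p, hval r (C ∪ C') p) - hval r C' p' := by
        intro p'
        refine ciSup_le fun p => ?_
        obtain ⟨q, hq⟩ := hval_super r hr0 C C' hd p p'
        linarith [le_ciSup (hbdd (C ∪ C')) q]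
      have h2 : (⨆ p, hval r C' p) ≤ (⨆ p, hval r (C ∪ C') p) - (⨆ p, hval r C p) :=
        ciSup_le fun p => by linarith [h1 p]
      linarith
  obtain ⟨z, hvz⟩ : ∃ z : W, ∀ A, (⨆ p, hval r A p) ≤ z.1 A := by
    obtain ⟨z, hz, hvz⟩ := hv.exists_max
    exact ⟨⟨z, hz⟩, hvz⟩
  refine ⟨z, fun Y => ?_⟩
  by_cases hzY : z ∈ Y
  · rw [Finset.insert_eq_of_mem hzY]
    exact hrd Y
  refine delta_le _ _ (hr0 Y) ?_
  rintro ⟨E, c⟩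
  unfold val
  rw [Finset.sum_insert hzY]
  simp only
  set P := E.filter (fun i => c i = z)
  set Q := E.filter (fun i => ¬ c i = z)
  have h1 := z.2.super P Q (Finset.disjoint_filter_filter_not E E _)
  have h2 := z.2.le_one (P ∪ Q)
  have h3 := (le_ciSup (hbdd Q) ({Y}, fun i => (Y, c i))).trans (hvz Q)
  have h4 : hval r Q ({Y}, fun i => (Y, c i)) =
      ∑ y ∈ Y, y.1 (E.filter (fun i => c i = y)) - r Y := by
    unfold hval
    simp only [Finset.sum_singleton]
    congr 1
    refine Finset.sum_congr rfl fun y hy => ?_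
    refine congrArg y.1 ?_
    ext i
    simp only [Q, Finset.mem_filter, Prod.mk.injEq, true_and]
    constructor
    · rintro ⟨⟨a, _⟩, b⟩
      exact ⟨a, b⟩
    · rintro ⟨a, b⟩
      exact ⟨⟨a, fun h => hzY (by rw [← h, b]; exact hy)⟩, b⟩
  rw [h4] at h3
  linarith

/-- Translation of finite sets. -/
def sh (n : ℤ) (A : Finset ℤ) : Finset ℤ := A.map (Equiv.addRight n).toEmbedding

theorem mem_sh (n : ℤ) (A : Finset ℤ) (i : ℤ) : i ∈ sh n A ↔ i - n ∈ A := by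
  unfold sh
  rw [Finset.mem_map_equiv]
  simp [sub_eq_add_neg]

theorem sh_sh (m n : ℤ) (A : Finset ℤ) : sh m (sh n A) = sh (n + m) A := by
  ext i
  simp only [mem_sh]
  rw [show i - m - n = i - (n + m) by ring]

theorem sh_zero (A : Finset ℤ) : sh 0 A = A := by
  ext i
  simp [mem_sh]

theorem sh_disj {n : ℤ} {A B : Finset ℤ} (h : Disjoint A B) : Disjoint (sh n A) (sh n B) := by
  rw [Finset.disjoint_left]
  intro i hi hi'
  rw [mem_sh] at hi hi'
  exact Finset.disjoint_left.1 h hi hi'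

theorem sh_union (n : ℤ) (A B : Finset ℤ) : sh n (A ∪ B) = sh n A ∪ sh n B := by
  ext i
  simp [mem_sh]

/-- The shift map. -/
def T (x : W) : W := ⟨fun A => x.1 (sh 1 A), by
  refine ⟨⟨fun A => x.2.nonneg _, fun A B hd => ?_, fun A => x.2.le_one _⟩, fun A ε hε => ?_⟩
  · simp only [sh_union]
    exact x.2.super _ _ (sh_disj hd)
  · obtain ⟨B, hB, hB'⟩ := x.2.compl (sh 1 A) ε hε
    refine ⟨sh (-1) B, ?_, ?_⟩
    · have := sh_disj (n := -1) hB
      rwa [sh_sh, show (1 : ℤ) + -1 = 0 by norm_num, sh_zero] at this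
    · simp only [sh_sh]
      rw [show (-1 : ℤ) + 1 = 0 by norm_num, sh_zero]
      exact hB'⟩

theorem T_nonexp (x y : W) : delta {T x, T y} ≤ delta {x, y} := by
  by_cases hxy : T x = T y
  · rw [hxy]
    have : delta {T y, T y} = 0 := by
      rw [delta_eq_zero_iff]
      simp
    rw [this]
    exact delta_nonneg _
  · refine delta_le _ _ (delta_nonneg _) ?_
    rintro ⟨E, c⟩
    unfold val
    rw [Finset.sum_pair hxy]
    refine gen_pair (x := x) (y := y) (E := sh 1 (E.filter (fun i => c i = T x)))
      (E' := sh 1 (E.filter (fun i => c i = T y))) (by simp) (by simp) (sh_disj ?_)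
    rw [Finset.disjoint_left]
    intro i hi hi'
    rw [Finset.mem_filter] at hi hi'
    exact hxy (hi.2.symm.trans hi'.2)

theorem T_ne (x : W) : T x ≠ x := by
  intro h
  have h1 : ∀ A, x.1 (sh 1 A) = x.1 A := fun A => congrFun (congrArg Subtype.val h) A
  have h2 : ∀ n : ℕ, ∀ A, x.1 (sh n A) = x.1 A := by
    intro n
    induction n with
    | zero => intro A; simp [sh_zero]
    | succ k ih =>
      intro A
      have := sh_sh 1 (k : ℤ) A
      push_cast
      rw [← this, h1, ih]
  obtain ⟨A, -, hA⟩ := x.2.compl ∅ (1 / 4) (by norm_num)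
  have h0 : x.1 ∅ ≤ 0 := by
    have := x.2.super ∅ ∅ (Finset.disjoint_empty_left _)
    rw [Finset.union_empty] at this
    linarith
  obtain ⟨N, hN⟩ : ∃ N : ℕ, ∀ a ∈ A, a.natAbs ≤ N :=
    ⟨A.sup Int.natAbs, fun a ha => Finset.le_sup (f := Int.natAbs) ha⟩
  have hd : Disjoint A (sh ((2 * N + 1 : ℕ) : ℤ) A) := by
    rw [Finset.disjoint_left]
    intro i hi hi'
    rw [mem_sh] at hi'
    have a1 := hN _ hi
    have a2 := hN _ hi'
    omega
  have h3 := x.2.super _ _ hd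
  rw [h2] at h3
  linarith [x.2.le_one (A ∪ sh ((2 * N + 1 : ℕ) : ℤ) A)]

theorem delta_pair_le (x y : W) : delta {x, y} ≤ 1 := by
  refine delta_le _ _ zero_le_one fun p => ?_
  calc val {x, y} p ≤ ∑ w ∈ ({x, y} : Finset W), (1 : ℝ) :=
        Finset.sum_le_sum fun w _ => w.2.le_one _
    _ = (({x, y} : Finset W).card : ℝ) := by simp
    _ ≤ 2 := by exact_mod_cast Finset.card_le_two
    _ = 1 + 1 := by norm_num

end CapDiv

/-- There exist a hyperconvex diversity `(X, δ)` whose induced metric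
space `(X, d)`, `d(x,y) = δ {x,y}`, is bounded, and a map `T : X → X` which is
nonexpansive with respect to `d` but has no fixed point. -/
theorem exists_bounded_induced_metric_fixed_point_free_nonexpansive :
    ∃ (X : Type) (_ : DecidableEq X) (D : Diversity X) (T : X → X),
      D.Hyperconvex ∧
      (∃ M : ℝ, ∀ x y : X, D.delta {x, y} ≤ M) ∧
      (∀ x y : X, D.delta {T x, T y} ≤ D.delta {x, y}) ∧
      ∀ x : X, T x ≠ x := by
  exact ⟨CapDiv.W, inferInstance, CapDiv.D, CapDiv.T, CapDiv.hyperconvex,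
    ⟨1, CapDiv.delta_pair_le⟩, CapDiv.T_nonexp, CapDiv.T_ne⟩
end
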